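/- Let X be the nonnegative-integer-valued random variable with the critical distribution P(X = n) = C_n/2^{2n+1}, where C_n is the n-th Catalan number. Then the tail satisfies P(X > n) ≃ 1/(√π · √n) as n → ∞; that is, lim_{n→∞} √(π n) · P(X > n) = 1. -/

import Mathlib

/-!
Put `a n = centralBinom n / 4 ^ n`. The recurrence `(n + 1) a (n + 1) = (n + 1/2) a n` gives
`a n - a (n + 1) = a n / (2 n + 2) = C_n / 2 ^ (2 n + 1)`, so the probabilities telescope; as
`a n → 0`, the tail is exactly `P(X > n) = a (n + 1)`.

The asymptotics of `a` come from the Wallis product `W`: the recurrences of `a` and `W` combine to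
`a n ^ 2 * (2 n + 1) * W n = 1`. Since `W n → π / 2`, this yields both `a n → 0` and
`π n * a (n + 1) ^ 2 → 1`, and the claim follows by taking square roots.
-/

open Filter Real Topology

/-- The normalised central binomial coefficient `binom(2n, n) / 4 ^ n`, which is `P(X ≥ n)` for the
critical distribution. -/
noncomputable def normCentralBinom (n : ℕ) : ℝ := (n.centralBinom : ℝ) / 4 ^ n

lemma normCentralBinom_nonneg (n : ℕ) : 0 ≤ normCentralBinom n := by
  unfold normCentralBinom; positivity

lemma normCentralBinom_succ (n : ℕ) :
    normCentralBinom (n + 1) = normCentralBinom n * ((2 * n + 1) / (2 * n + 2)) := by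
  have h : ((n : ℝ) + 1) * (n + 1).centralBinom = 2 * (2 * n + 1) * n.centralBinom := by
    exact_mod_cast Nat.succ_mul_centralBinom_succ n
  unfold normCentralBinom
  rw [pow_succ]
  field_simp
  linear_combination 2 * h

/-- The critical probabilities are the decrements of `normCentralBinom`. -/
lemma catalan_div_eq_sub (n : ℕ) :
    (catalan n : ℝ) / 2 ^ (2 * n + 1) = normCentralBinom n - normCentralBinom (n + 1) := by
  have h : ((n : ℝ) + 1) * catalan n = n.centralBinom := by
    exact_mod_cast succ_mul_catalan_eq_centralBinom n
  have h4 : (2 : ℝ) ^ (2 * n + 1) = 4 ^ n * 2 := by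
    rw [pow_succ, pow_mul]; norm_num
  rw [normCentralBinom_succ, h4]
  unfold normCentralBinom
  rw [← h]
  field_simp
  ring

lemma normCentralBinom_sq_mul_W (n : ℕ) :
    normCentralBinom n ^ 2 * (2 * n + 1) * Wallis.W n = 1 := by
  induction n with
  | zero => simp [normCentralBinom, Wallis.W]
  | succ k ih =>
    refine Eq.trans ?_ ih
    rw [normCentralBinom_succ, Wallis.W_succ]
    push_cast
    field_simp
    ring

lemma normCentralBinom_sq (n : ℕ) :
    normCentralBinom n ^ 2 = (2 * (n : ℝ) + 1)⁻¹ * (Wallis.W n)⁻¹ := by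
  have hW := (Wallis.W_pos n).ne'
  have h := normCentralBinom_sq_mul_W n
  field_simp
  linarith

lemma tendsto_normCentralBinom : Tendsto normCentralBinom atTop (𝓝 0) := by
  have h1 : Tendsto (fun n : ℕ => (2 * (n : ℝ) + 1)⁻¹) atTop (𝓝 0) :=
    tendsto_inv_atTop_zero.comp (tendsto_atTop_add_const_right _ _
      (tendsto_natCast_atTop_atTop.const_mul_atTop two_pos))
  have h2 := (h1.mul (Wallis.tendsto_W_nhds_pi_div_two.inv₀ (by positivity))).sqrt
  simp only [← normCentralBinom_sq, zero_mul, Real.sqrt_zero] at h2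
  simpa only [Real.sqrt_sq (normCentralBinom_nonneg _)] using h2

/-- The tail in closed form: `P(X > n) = normCentralBinom (n + 1)`. -/
lemma hasSum_catalan_tail (n : ℕ) :
    HasSum (fun m : ℕ => if n < m then (catalan m : ℝ) / 2 ^ (2 * m + 1) else 0)
      (normCentralBinom (n + 1)) := by
  rw [hasSum_iff_tendsto_nat_of_nonneg (fun m => by split_ifs <;> positivity)]
  -- The maximum accounts for the partial sums that stop before the first nonzero term.
  have hsum (N : ℕ) : ∑ m ∈ Finset.range N,
      (if n < m then (catalan m : ℝ) / 2 ^ (2 * m + 1) else 0) =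
      normCentralBinom (n + 1) - normCentralBinom (max N (n + 1)) := by
    induction N with
    | zero => simp
    | succ N ih =>
      rw [Finset.sum_range_succ, ih]
      split_ifs with h
      · rw [catalan_div_eq_sub, max_eq_left (by omega), max_eq_left (by omega)]
        ring
      · rw [max_eq_right (by omega), max_eq_right (by omega)]
        ring
  simp only [hsum]
  have hmax : Tendsto (fun N : ℕ => max N (n + 1)) atTop atTop :=
    tendsto_atTop_mono (fun N => le_max_left _ _) tendsto_id
  simpa using (tendsto_normCentralBinom.comp hmax).const_sub (normCentralBinom (n + 1))

/-- For the critical distribution `P(X = n) = C_n/2^{2n+1}`, the tail satisfies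
`P(X > n) ≃ 1/√(π n)` as `n → ∞`, i.e. `√(π n) · P(X > n) → 1`. -/
theorem critical_catalan_tail :
    Tendsto
      (fun n : ℕ =>
        Real.sqrt (π * n) *
          ∑' m : ℕ, if n < m then (catalan m : ℝ) / 2 ^ (2 * m + 1) else 0)
      atTop (𝓝 1) := by
  simp only [(hasSum_catalan_tail _).tsum_eq]
  have hratio : Tendsto (fun n : ℕ => (n : ℝ) * (2 * ((n + 1 : ℕ) : ℝ) + 1)⁻¹) atTop
      (𝓝 (1 / 2)) := by
    have hinv : Tendsto (fun n : ℕ => 1 / 2 - 3 / 2 * (2 * ((n + 1 : ℕ) : ℝ) + 1)⁻¹) atTop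
        (𝓝 (1 / 2 - 3 / 2 * 0)) :=
      ((tendsto_inv_atTop_zero.comp (tendsto_atTop_add_const_right _ _
        ((tendsto_natCast_atTop_atTop.comp (tendsto_add_atTop_nat 1)).const_mul_atTop
          two_pos))).const_mul _).const_sub _
    rw [mul_zero, sub_zero] at hinv
    refine hinv.congr fun n => ?_
    push_cast
    field_simp
    ring
  have hW := (Wallis.tendsto_W_nhds_pi_div_two.comp (tendsto_add_atTop_nat 1)).inv₀
    (by positivity)
  have h := ((hratio.mul hW).const_mul π).sqrt
  have hone : π * (1 / 2 * (π / 2)⁻¹) = 1 := by field_simp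
  rw [hone, Real.sqrt_one] at h
  refine h.congr fun n => ?_
  rw [← Real.sqrt_sq (normCentralBinom_nonneg (n + 1)), ← Real.sqrt_mul (by positivity),
    normCentralBinom_sq]
  simp only [Function.comp_apply]
  congr 1
  ring
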